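/- Let d ≥ 5 and n ≥ 4. HAT is irreducible on the equivalence classes of non-isolated n-element configurations: for any non-isolated n-element configurations U, V ⊂ Z^d there exists t ≥ 0 such that P_U(Û_t = V̂) > 0. -/

import Mathlib

open MeasureTheory

namespace HATFormal

/-- Points of the lattice `ℤ^d`. -/
abbrev Pt (d : ℕ) := Fin d → ℤ

/-- The `2d` unit steps of the simple random walk on `ℤ^d`. -/
def Dir (d : ℕ) : Set (Pt d) :=
  {s | ∃ i : Fin d, s = Pi.single i 1 ∨ s = Pi.single i (-1)}

/-- The position, after `t` steps, of the walk started at `x` with steps `s`. -/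
def wpos (d : ℕ) (x : Pt d) {T : ℕ} (s : Fin T → Pt d) (t : ℕ) : Pt d :=
  x + ∑ i ∈ Finset.univ.filter (fun i : Fin T => (i : ℕ) < t), s i

/-- The probability of an event `P` of the first `T` steps of simple random walk on `ℤ^d`. -/
noncomputable def prob (d T : ℕ) (P : (Fin T → Pt d) → Prop) : ℝ :=
  (Nat.card {s : Fin T → Pt d // (∀ i, s i ∈ Dir d) ∧ P s} : ℝ) / ((2 * d : ℕ) : ℝ) ^ T

open Classical in
/-- `esc d A x = P_x(τ_A = ∞)` if `x ∈ A`, and `0` otherwise. -/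
noncomputable def esc (d : ℕ) (A : Set (Pt d)) (x : Pt d) : ℝ :=
  if x ∈ A then ⨅ T : ℕ, prob d T (fun s => ∀ t, 1 ≤ t → t ≤ T → wpos d x s t ∉ A) else 0

/-- The capacity of `A`. -/
noncomputable def capa (d : ℕ) (A : Set (Pt d)) : ℝ := ∑' x : A, esc d A (x : Pt d)

/-- The harmonic measure `H_A(x) = esc_A(x) / cap_A`. -/
noncomputable def harm (d : ℕ) (A : Set (Pt d)) (x : Pt d) : ℝ := esc d A x / capa d A

/-- `P_x(τ_W < ∞)`. -/
noncomputable def retProb (d : ℕ) (W : Set (Pt d)) (x : Pt d) : ℝ :=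
  ∑' t : ℕ, prob d t (fun s => 1 ≤ t ∧ wpos d x s t ∈ W ∧
    ∀ u, 1 ≤ u → u < t → wpos d x s u ∉ W)

/-- `P_x(τ_W < ∞ and S_{τ_W − 1} = y)`. -/
noncomputable def hitFrom (d : ℕ) (W : Set (Pt d)) (x y : Pt d) : ℝ :=
  ∑' t : ℕ, prob d t (fun s => 1 ≤ t ∧ wpos d x s t ∈ W ∧ wpos d x s (t - 1) = y ∧
    ∀ u, 1 ≤ u → u < t → wpos d x s u ∉ W)

/-- `P_x(τ_W < ∞ and S_{τ_W} ∈ T)`. -/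
noncomputable def firstHitIn (d : ℕ) (W T : Set (Pt d)) (x : Pt d) : ℝ :=
  ∑' t : ℕ, prob d t (fun s => 1 ≤ t ∧ wpos d x s t ∈ W ∧ wpos d x s t ∈ T ∧
    ∀ u, 1 ≤ u → u < t → wpos d x s u ∉ W)

/-- `P_x(S_{τ_W − 1} = y ∣ τ_W < ∞)`. -/
noncomputable def transP (d : ℕ) (W : Set (Pt d)) (x y : Pt d) : ℝ :=
  hitFrom d W x y / retProb d W x

/-- The Green's function of simple random walk on `ℤ^d`. -/
noncomputable def green (d : ℕ) (x : Pt d) : ℝ :=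
  ∑' t : ℕ, prob d t (fun s => wpos d x s t = 0)

/-- Configurations: finite subsets of `ℤ^d`. -/
abbrev Conf (d : ℕ) := Finset (Pt d)

/-- `p_U(x, y)`, the probability that HAT activates at `x` and transports to `y`. -/
noncomputable def pHAT (d : ℕ) (U : Conf d) (x y : Pt d) : ℝ :=
  harm d (↑U) x * transP d ((↑U : Set (Pt d)) \ {x}) x y

open Classical in
/-- The transition probabilities of HAT. -/
noncomputable def hatProb (d : ℕ) (U V : Conf d) : ℝ :=
  if V = U then ∑' z : Pt d, pHAT d U z z
  else ∑' x : Pt d, ∑' y : Pt d,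
    if x ∈ U ∧ x ≠ y ∧ V = insert y (U.erase x) then pHAT d U x y else 0

instance (d : ℕ) : MeasurableSpace (Conf d) := ⊤

/-- `μ` is the law of HAT started from `U`. -/
def IsHATLaw (d : ℕ) (U : Conf d) (μ : Measure (ℕ → Conf d)) : Prop :=
  IsProbabilityMeasure μ ∧
  ∀ (t : ℕ) (u : ℕ → Conf d),
    μ {ω | ∀ s ≤ t, ω s = u s} =
      (if u 0 = U then 1 else 0) *
        ∏ s ∈ Finset.range t, ENNReal.ofReal (hatProb d (u s) (u (s + 1)))

/-- A signed permutation plus translation of `ℤ^d`. -/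
def SymImage (d : ℕ) (σ : Equiv.Perm (Fin d)) (ε : Fin d → ℤ) (v : Pt d) (x : Pt d) : Pt d :=
  fun i => v i + ε i * x (σ i)

/-- `SymEq d U V` holds when `V = gU` for a symmetry `g` of `ℤ^d`. -/
def SymEq (d : ℕ) (U V : Conf d) : Prop :=
  ∃ (σ : Equiv.Perm (Fin d)) (ε : Fin d → ℤ) (v : Pt d),
    (∀ i, ε i = 1 ∨ ε i = -1) ∧ V = U.image (SymImage d σ ε v)

/-- Euclidean distance on `ℤ^d`. -/
noncomputable def dist0 (d : ℕ) (x y : Pt d) : ℝ :=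
  Real.sqrt (∑ i, ((x i : ℝ) - (y i : ℝ)) ^ 2)

/-- Euclidean distance between finite subsets of `ℤ^d`. -/
noncomputable def setDist (d : ℕ) (A B : Finset (Pt d)) : ℝ :=
  sInf {r : ℝ | ∃ x ∈ A, ∃ y ∈ B, r = dist0 d x y}

/-- Euclidean diameter of a finite subset of `ℤ^d`. -/
noncomputable def diam0 (d : ℕ) (A : Finset (Pt d)) : ℝ :=
  sSup {r : ℝ | ∃ x ∈ A, ∃ y ∈ A, r = dist0 d x y}

/-- Lattice (nearest-neighbor) adjacency in `ℤ^d`. -/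
def latAdj (d : ℕ) (x y : Pt d) : Prop := (∑ i, (x i - y i).natAbs) = 1

/-- Exterior lattice boundary of a set. -/
def bdry (d : ℕ) (A : Set (Pt d)) : Set (Pt d) := {z | z ∉ A ∧ ∃ w ∈ A, latAdj d z w}

/-- Non-isolated configurations: some exposed element has a lattice neighbor in the set. -/
def NonIso (d : ℕ) (U : Conf d) : Prop :=
  ∃ x ∈ U, 0 < esc d (↑U) x ∧ ∃ y ∈ U, latAdj d x y

/-- `C` is a clustering (ordered partition into nonempty clusters) of `U`. -/
def IsClusteringOf (d : ℕ) {k : ℕ} (C : Fin k → Finset (Pt d)) (U : Finset (Pt d)) : Prop :=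
  (∀ i, (C i).Nonempty) ∧ (∀ i j, i ≠ j → Disjoint (C i) (C j)) ∧
    Finset.univ.biUnion C = U

/-- `C^{≠ i}`, the union of the clusters other than `i`. -/
def others (d : ℕ) {k : ℕ} (C : Fin k → Finset (Pt d)) (i : Fin k) : Finset (Pt d) :=
  Finset.univ.biUnion fun j => if j = i then ∅ else C j

/-- The separation of a clustering. -/
noncomputable def sep (d : ℕ) {k : ℕ} (C : Fin k → Finset (Pt d)) : ℝ :=
  ⨅ i, setDist d (C i) (others d C i)

/-- `(a, b)` separated dimer-or-trimer (DOT) clusterings. -/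
def IsDOT (d : ℕ) {k : ℕ} (C : Fin k → Finset (Pt d)) (a b : ℝ) : Prop :=
  (∀ i, (C i).card = 2 ∨ (C i).card = 3) ∧ a ≤ sep d C ∧
    ∀ i, diam0 d (C i) ≤ b * Real.log (setDist d (C i) (others d C i))

/-- Clusterings with an unspecified number of clusters. -/
abbrev ClusteringS (d : ℕ) := Σ k : ℕ, Fin k → Finset (Pt d)

/-- `π(C)`, the union of the clusters of `C`. -/
def confOf (d : ℕ) (C : ClusteringS d) : Conf d := Finset.univ.biUnion C.2

/-- `C ∈ 𝒞(U, a, b)`. -/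
def InC (d : ℕ) (U : Conf d) (a b : ℝ) (C : ClusteringS d) : Prop :=
  IsClusteringOf d C.2 U ∧ IsDOT d C.2 a b

/-- `U ∈ 𝒰_{d,n}(a, b)`. -/
def InU (d n : ℕ) (a b : ℝ) (U : Conf d) : Prop :=
  U.card = n ∧ ∃ C : ClusteringS d, InC d U a b C

/-- `C` is a clustering of an `n`-element configuration. -/
def IsClusteringConf (d n : ℕ) (C : ClusteringS d) : Prop :=
  (∀ i, (C.2 i).Nonempty) ∧ (∀ i j, i ≠ j → Disjoint (C.2 i) (C.2 j)) ∧
    (confOf d C).card = n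

open Classical in
/-- One step of the natural clustering. -/
noncomputable def clustStep (d : ℕ) (Ut Ut1 : Conf d) (C : ClusteringS d) : ClusteringS d :=
  if Ut1 = Ut then C
  else if h : ∃ p : Pt d × Pt d × Fin C.1,
      Ut \ Ut1 = {p.1} ∧ Ut1 \ Ut = {p.2.1} ∧ p.1 ∈ C.2 p.2.2 then
    ⟨C.1, Function.update C.2 h.choose.2.2
      (insert h.choose.2.1 ((C.2 h.choose.2.2).erase h.choose.1))⟩
  else ⟨1, fun _ => Ut1⟩

/-- The natural clustering of the trajectory `ω` with initial clustering `C0`. -/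
noncomputable def natClust (d : ℕ) (ω : ℕ → Conf d) (C0 : ClusteringS d) : ℕ → ClusteringS d
  | 0 => C0
  | t + 1 => clustStep d (ω t) (ω (t + 1)) (natClust d ω C0 t)

/-- `a_s = s^{1/2 − n^{−100}} + 100 n`. -/
noncomputable def aSep (n s : ℕ) : ℝ :=
  (s : ℝ) ^ ((1 : ℝ) / 2 - (n : ℝ) ^ (-(100 : ℝ))) + 100 * n

/-- `C^{i, x, y}`: remove `x` from cluster `i` of `C` and add `y` to that cluster. -/
def updC (d : ℕ) (C : ClusteringS d) (i : Fin C.1) (x y : Pt d) : ClusteringS d :=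
  ⟨C.1, Function.update C.2 i (insert y ((C.2 i).erase x))⟩

open Classical in
/-- The transition probabilities of the lifting of HAT to clusterings. -/
noncomputable def liftProb (d : ℕ) (E0 E1 : ClusteringS d) : ℝ :=
  ∑' x : Pt d, ∑' y : Pt d,
    if ∃ i : Fin E0.1, x ∈ E0.2 i ∧ E1 = updC d E0 i x y
    then pHAT d (confOf d E0) x y else 0

/-- The capacity of a clustering: the sum of the capacities of its clusters. -/
noncomputable def capS (d : ℕ) (C : ClusteringS d) : ℝ := ∑ i, capa d (↑(C.2 i))

/-- `H_C(i, x) = esc_{C^i}(x) / cap_C`. -/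
noncomputable def harmS (d : ℕ) (C : ClusteringS d) (i : Fin C.1) (x : Pt d) : ℝ :=
  esc d (↑(C.2 i)) x / capS d C

/-- `q_C(i, x, y)`. -/
noncomputable def qIHAT (d : ℕ) (C : ClusteringS d) (i : Fin C.1) (x y : Pt d) : ℝ :=
  harmS d C i x * transP d ((↑(C.2 i) : Set (Pt d)) \ {x}) x y

open Classical in
/-- The transition probabilities of intracluster HAT (IHAT). -/
noncomputable def ihatProb (d : ℕ) (D E : ClusteringS d) : ℝ :=
  ∑' x : Pt d, ∑' y : Pt d, ∑ i : Fin D.1,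
    if x ∈ D.2 i ∧ E = updC d D i x y then qIHAT d D i x y else 0

instance (d : ℕ) : MeasurableSpace (ClusteringS d) := ⊤

open Classical in
/-- `μ` is the law of the lifted HAT chain started from `E0`. -/
def IsLiftLaw (d : ℕ) (E0 : ClusteringS d) (μ : Measure (ℕ → ClusteringS d)) : Prop :=
  IsProbabilityMeasure μ ∧
  ∀ (t : ℕ) (u : ℕ → ClusteringS d),
    μ {ω | ∀ s ≤ t, ω s = u s} =
      (if u 0 = E0 then 1 else 0) *
        ∏ s ∈ Finset.range t, ENNReal.ofReal (liftProb d (u s) (u (s + 1)))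

open Classical in
/-- `μ` is the law of intracluster HAT started from `D0`. -/
def IsIHATLaw (d : ℕ) (D0 : ClusteringS d) (μ : Measure (ℕ → ClusteringS d)) : Prop :=
  IsProbabilityMeasure μ ∧
  ∀ (t : ℕ) (u : ℕ → ClusteringS d),
    μ {ω | ∀ s ≤ t, ω s = u s} =
      (if u 0 = D0 then 1 else 0) *
        ∏ s ∈ Finset.range t, ENNReal.ofReal (ihatProb d (u s) (u (s + 1)))

/-- `Pairs(E0, E1)`. -/
def Pairs (d : ℕ) (E0 E1 : ClusteringS d) : Set (Pt d × Pt d) :=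
  {p | 0 < pHAT d (confOf d E0) p.1 p.2 ∧
    ∃ i : Fin E0.1, p.1 ∈ E0.2 i ∧ E1 = updC d E0 i p.1 p.2}

/-- `Triples(E0, E1)`. -/
def Triples (d : ℕ) (E0 E1 : ClusteringS d) : Set (Fin E0.1 × Pt d × Pt d) :=
  {q | 0 < qIHAT d E0 q.1 q.2.1 q.2.2 ∧ E1 = updC d E0 q.1 q.2.1 q.2.2}

/-- The first standard basis vector of `ℤ^d`. -/
def e1v (d : ℕ) : Pt d := fun i => if (i : ℕ) = 0 then 1 else 0

/-- Reference dimers and trimers. -/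
def Ref (d : ℕ) : Set (Finset (Pt d)) :=
  {A | ∃ x : Pt d, A = {x, x + e1v d} ∨ A = {x, x + e1v d, x + e1v d + e1v d}}

/-- *-adjacency in `ℤ^d`: distinct points differing by at most one in each coordinate. -/
def starAdj (d : ℕ) (x y : Pt d) : Prop := x ≠ y ∧ ∀ i, (x i - y i).natAbs ≤ 1

/-- The *-visible boundary of `A`. -/
def visBdry (d : ℕ) (A : Finset (Pt d)) : Set (Pt d) :=
  {x | (∃ y ∈ A, starAdj d x y) ∧
    ∃ γ : ℕ → Pt d, γ 0 = x ∧ (∀ t, latAdj d (γ t) (γ (t + 1))) ∧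
      (∀ t, γ t ∉ A) ∧ ∀ r : ℝ, ∃ t, r < dist0 d (γ t) 0}

/-- `A` is connected in the nearest-neighbor graph of `ℤ^d`. -/
def LatConnected (d : ℕ) (A : Finset (Pt d)) : Prop :=
  ∀ x ∈ A, ∀ y ∈ A, ∃ (L : ℕ) (γ : ℕ → Pt d), γ 0 = x ∧ γ L = y ∧
    (∀ t < L, latAdj d (γ t) (γ (t + 1))) ∧ ∀ t ≤ L, γ t ∈ A

/-- Strict lexicographic order on `ℤ^d`. -/
def lexLt (d : ℕ) (x y : Pt d) : Prop :=
  ∃ i : Fin d, (∀ j, j < i → x j = y j) ∧ x i < y i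

/-- `x` is the lex (least) element of `A`. -/
def IsLex (d : ℕ) (A : Finset (Pt d)) (x : Pt d) : Prop :=
  x ∈ A ∧ ∀ y ∈ A, y ≠ x → lexLt d x y

/-! ### Combinatorial part -/

section Comb

variable {d : ℕ}

/-- One lattice step into the complement of `W`. -/
def stp (W : Finset (Pt d)) (a b : Pt d) : Prop := b ∉ W ∧ b - a ∈ Dir d

/-- `q` is reachable from `p` by a lattice path avoiding `W` after time zero. -/
def Conn (W : Finset (Pt d)) : Pt d → Pt d → Prop := Relation.ReflTransGen (stp W)

lemma dir_neg {e : Pt d} (h : e ∈ Dir d) : -e ∈ Dir d := by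
  obtain ⟨i, h | h⟩ := h
  · exact ⟨i, Or.inr (by rw [h, Pi.single_neg])⟩
  · exact ⟨i, Or.inl (by rw [h, Pi.single_neg, neg_neg])⟩

lemma dir_swap {a b : Pt d} (h : b - a ∈ Dir d) : a - b ∈ Dir d := by
  have := dir_neg h
  rwa [neg_sub] at this

lemma dir_single (i : Fin d) : (Pi.single i 1 : Pt d) ∈ Dir d := ⟨i, Or.inl rfl⟩

lemma dir_single' (i : Fin d) : (Pi.single i (-1) : Pt d) ∈ Dir d := ⟨i, Or.inr rfl⟩

lemma conn_symm {W : Finset (Pt d)} {p q : Pt d} (hp : p ∉ W) (h : Conn W p q) :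
    q ∉ W ∧ Conn W q p := by
  induction h with
  | refl => exact ⟨hp, .refl⟩
  | tail _ hs ih => exact ⟨hs.1, (Relation.ReflTransGen.single ⟨ih.1, dir_swap hs.2⟩).trans ih.2⟩

/-- Straight segments. -/
lemma conn_seg {W : Finset (Pt d)} {p e : Pt d} (he : e ∈ Dir d) (k : ℕ)
    (h : ∀ j : ℕ, 1 ≤ j → j ≤ k → p + (j : ℤ) • e ∉ W) : Conn W p (p + (k : ℤ) • e) := by
  induction k with
  | zero =>
    have : p + ((0 : ℕ) : ℤ) • e = p := by simp
    rw [this]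
    exact .refl
  | succ k ih =>
    refine (ih fun j h1 h2 => h j h1 (by omega)).tail ⟨h _ (by omega) le_rfl, ?_⟩
    have : p + ((k + 1 : ℕ) : ℤ) • e - (p + (k : ℤ) • e) = e := by
      push_cast; rw [add_smul, one_smul]; abel
    rwa [this]

/-- Connectivity of slabs. -/
lemma slab_conn (i0 : Fin d) (lo hi : ℤ) (q' : Pt d) (hq' : lo ≤ q' i0 ∧ q' i0 ≤ hi) :
    ∀ (n : ℕ) (q : Pt d), (∑ i, (q i - q' i).natAbs) = n → lo ≤ q i0 → q i0 ≤ hi →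
    Relation.ReflTransGen (fun a b : Pt d => b - a ∈ Dir d ∧ (lo ≤ a i0 ∧ a i0 ≤ hi) ∧
      (lo ≤ b i0 ∧ b i0 ≤ hi)) q q' := by
  intro n
  induction n with
  | zero =>
    intro q h _ _
    have : q = q' := by
      funext i
      have := (Finset.sum_eq_zero_iff.1 h) i (Finset.mem_univ _)
      omega
    rw [this]
  | succ n ih =>
    intro q h h1 h2
    have : ∃ i, q i ≠ q' i := by
      by_contra hc
      push Not at hc
      rw [Finset.sum_eq_zero (fun i _ => by rw [hc i]; simp)] at h
      omega
    obtain ⟨i, hi'⟩ := this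
    have key : ∀ c : ℤ, (c = 1 ∨ c = -1) → ((q i + c - q' i).natAbs + 1 = (q i - q' i).natAbs) →
        Relation.ReflTransGen (fun a b : Pt d => b - a ∈ Dir d ∧ (lo ≤ a i0 ∧ a i0 ≤ hi) ∧
          (lo ≤ b i0 ∧ b i0 ≤ hi)) q q' := by
      intro c hc hcc
      have hb : lo ≤ (q + Pi.single i c : Pt d) i0 ∧ (q + Pi.single i c : Pt d) i0 ≤ hi := by
        by_cases hii : i0 = i
        · subst hii
          simp only [Pi.add_apply, Pi.single_eq_same]
          omega
        · simp [hii, h1, h2]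
      refine Relation.ReflTransGen.head ⟨?_, ⟨h1, h2⟩, hb⟩ (ih (q + Pi.single i c) ?_ hb.1 hb.2)
      · rw [add_sub_cancel_left]
        rcases hc with rfl | rfl
        · exact dir_single i
        · exact dir_single' i
      · rw [← Finset.add_sum_erase _ _ (Finset.mem_univ i)] at h ⊢
        have h3 : ∑ x ∈ Finset.univ.erase i, ((q + (Pi.single i c : Pt d)) x - q' x).natAbs
            = ∑ x ∈ Finset.univ.erase i, (q x - q' x).natAbs := by
          refine Finset.sum_congr rfl fun x hx => ?_
          simp [(Finset.mem_erase.1 hx).1]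
        rw [h3]
        simp only [Pi.add_apply, Pi.single_eq_same]
        omega
    rcases lt_or_gt_of_ne hi' with h' | h'
    · exact key 1 (Or.inl rfl) (by omega)
    · exact key (-1) (Or.inr rfl) (by omega)

/-- `p` lies in the exterior of `W`: it is connected to a point above `W`. -/
def Ext (i0 : Fin d) (W : Finset (Pt d)) (p : Pt d) : Prop :=
  ∃ q, Conn W p q ∧ ∀ w ∈ W, w i0 < q i0

variable {i0 i1 i2 : Fin d}

lemma Ext.of_conn {W : Finset (Pt d)} {p q : Pt d} (h : Conn W p q) (hq : Ext i0 W q) :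
    Ext i0 W p := by
  obtain ⟨r, h1, h2⟩ := hq
  exact ⟨r, h.trans h1, h2⟩

lemma above_conn {W : Finset (Pt d)} {q q' : Pt d} (h : ∀ w ∈ W, w i0 < q i0)
    (h' : ∀ w ∈ W, w i0 < q' i0) : Conn W q q' := by
  have := slab_conn i0 (min (q i0) (q' i0)) (max (q i0) (q' i0)) q' ⟨by simp, by simp⟩ _ q rfl
    (by simp) (by simp)
  refine Relation.ReflTransGen.mono ?_ _ _ this
  rintro a b ⟨h1, -, h3, -⟩
  refine ⟨fun hb => ?_, h1⟩
  have := h b hb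
  have := h' b hb
  omega

lemma Ext.conn {W : Finset (Pt d)} {p p' : Pt d} (hp' : p' ∉ W) (h : Ext i0 W p)
    (h' : Ext i0 W p') : Conn W p p' := by
  obtain ⟨q, a, b⟩ := h
  obtain ⟨q', a', b'⟩ := h'
  exact (a.trans (above_conn b b')).trans (conn_symm hp' a').2

lemma Ext.high {W : Finset (Pt d)} {p : Pt d} (h : Ext i0 W p) (r : ℤ) :
    ∃ z, Conn W p z ∧ r ≤ z i0 := by
  obtain ⟨q, a, b⟩ := h
  have hb : ∀ w ∈ W, w i0 < (q + Pi.single i0 (max 0 (r - q i0)) : Pt d) i0 := by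
    intro w hw
    have := b w hw
    simp only [Pi.add_apply, Pi.single_eq_same]
    omega
  refine ⟨_, a.trans (above_conn b hb), ?_⟩
  simp only [Pi.add_apply, Pi.single_eq_same]
  omega

lemma exists_box (W : Finset (Pt d)) : ∃ N : ℤ, 0 < N ∧ ∀ w ∈ W, ∀ i, |w i| < N := by
  induction W using Finset.induction_on with
  | empty => exact ⟨1, by simp⟩
  | insert a s _ ih =>
    obtain ⟨N, h0, h⟩ := ih
    refine ⟨N + ∑ i, |a i| , by positivity, fun w hw i => ?_⟩
    have hs : |a i| ≤ ∑ i, |a i| :=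
      Finset.single_le_sum (f := fun i => |a i|) (fun i _ => abs_nonneg _) (Finset.mem_univ i)
    rcases Finset.mem_insert.1 hw with rfl | hw
    · omega
    · have := h w hw i
      have := abs_nonneg (a i)
      omega

/-- Points outside a box containing `W` are in the exterior. -/
lemma Ext.far (h01 : i0 ≠ i1) {W : Finset (Pt d)} {N : ℤ} (hN : ∀ w ∈ W, ∀ i, |w i| < N)
    {p : Pt d} {i : Fin d} (hp : N ≤ |p i|) : Ext i0 W p := by
  have main : ∀ (p : Pt d) (i : Fin d), i ≠ i0 → N ≤ |p i| → Ext i0 W p := by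
    intro p i hi hp
    refine ⟨_, conn_seg (dir_single i0) (N + |p i0|).toNat (fun j _ _ hj => ?_), fun w hw => ?_⟩
    · have := hN _ hj i
      simp [hi] at this
      omega
    · have := hN w hw i0
      simp
      rw [abs_lt] at this
      have := neg_abs_le (p i0)
      omega
  by_cases hi : i = i0
  · subst hi
    by_cases h0 : 0 ≤ p i
    · refine ⟨p, .refl, fun w hw => ?_⟩
      have := hN w hw i
      rw [abs_of_nonneg h0] at hp
      rw [abs_lt] at this
      omega
    · refine Ext.of_conn (conn_seg (dir_single i1) (N + |p i1|).toNat (fun j _ _ hj => ?_))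
        (main _ i1 h01.symm ?_)
      · have := hN _ hj i
        simp [h01] at this
        omega
      · simp
        have := neg_abs_le (p i1)
        refine le_trans ?_ (le_abs_self _)
        omega
  · exact main p i hi hp

/-- A point with a free ray is in the exterior. -/
lemma Ext.ray (h01 : i0 ≠ i1) {W : Finset (Pt d)} {p e : Pt d} (he : e ∈ Dir d)
    (h : ∀ j : ℕ, 1 ≤ j → p + (j : ℤ) • e ∉ W) : Ext i0 W p := by
  obtain ⟨N, h0, hN⟩ := exists_box W
  obtain ⟨i, hi⟩ := id he
  refine Ext.of_conn (conn_seg he (N + |p i|).toNat (fun j h1 _ => h j h1))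
    (Ext.far h01 hN (i := i) ?_)
  have := neg_abs_le (p i)
  have := le_abs_self (p i)
  rcases hi with rfl | rfl
  · simp
    refine le_trans ?_ (le_abs_self _)
    omega
  · simp
    refine le_trans ?_ (neg_le_abs _)
    omega

/-- The combinatorial version of the HAT transition. -/
def HStep (i0 : Fin d) (A B : Finset (Pt d)) : Prop :=
  ∃ (W : Finset (Pt d)) (x y : Pt d), x ∉ W ∧ y ∉ W ∧ x ≠ y ∧ Ext i0 W x ∧ Ext i0 W y ∧
    (∃ w ∈ W, w - y ∈ Dir d) ∧ A = insert x W ∧ B = insert y W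

/-- Reachability by HAT transitions. -/
def HR (i0 : Fin d) : Finset (Pt d) → Finset (Pt d) → Prop := Relation.ReflTransGen (HStep i0)

lemma hr_move {W : Finset (Pt d)} {x y : Pt d} (hx : x ∉ W) (hy : y ∉ W) (ex : Ext i0 W x)
    (ey : Ext i0 W y) (hw : ∃ w ∈ W, w - y ∈ Dir d) : HR i0 (insert x W) (insert y W) := by
  by_cases h : x = y
  · rw [h]; exact .refl
  · exact .single ⟨W, x, y, hx, hy, h, ex, ey, hw, rfl, rfl⟩

/-- The line of `k` points starting at `m` in direction `i0`. -/
def line (i0 : Fin d) (m : Pt d) (k : ℕ) : Finset (Pt d) :=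
  (Finset.range k).image fun j : ℕ => m + Pi.single i0 (j : ℤ)

lemma mem_line {m x : Pt d} {k : ℕ} :
    x ∈ line i0 m k ↔ ∃ j < k, m + Pi.single i0 (j : ℤ) = x := by
  simp [line]

lemma line_level {m x : Pt d} {k : ℕ} (h : x ∈ line i0 m k) :
    m i0 ≤ x i0 ∧ x i0 < m i0 + k := by
  obtain ⟨j, hj, rfl⟩ := mem_line.1 h
  simp; omega

lemma line_succ (m : Pt d) (k : ℕ) :
    line i0 m (k + 1) = insert (m + Pi.single i0 (k : ℤ)) (line i0 m k) := by
  simp [line, Finset.range_add_one]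

lemma line_succ' (m : Pt d) (k : ℕ) :
    line i0 m (k + 1) = insert m (line i0 (m + Pi.single i0 1) k) := by
  ext x
  rw [Finset.mem_insert, mem_line, mem_line]
  constructor
  · rintro ⟨j, hj, rfl⟩
    rcases j with _ | j
    · left; simp
    · right
      exact ⟨j, by omega, by rw [add_assoc, ← Pi.single_add]; push_cast; rw [add_comm 1 (j : ℤ)]⟩
  · rintro (rfl | ⟨j, hj, rfl⟩)
    · exact ⟨0, by omega, by simp⟩
    · exact ⟨j + 1, by omega,
        by rw [add_assoc, ← Pi.single_add]; push_cast; rw [add_comm 1 (j : ℤ)]⟩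

/-- Forward: everything can be rearranged into a line. -/
lemma forward_aux (h01 : i0 ≠ i1) :
    ∀ (j : ℕ) (A : Finset (Pt d)) (m : Pt d) (k : ℕ), A.card = j → 
    (∀ a ∈ A, a i0 ≤ m i0) → m ∉ A → 
    HR i0 (A ∪ line i0 m (k + 1)) (line i0 m (k + 1 + j)) := by
  intro j
  induction j with
  | zero =>
    intro A m k hA _ _
    rw [Finset.card_eq_zero.1 hA]
    rw [Finset.empty_union]
    exact .refl
  | succ j ih =>
    intro A m k hA hle hm
    obtain ⟨x, hxA, hx⟩ := A.exists_min_image (fun a => a i0) (Finset.card_pos.1 (by omega))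
    have hxl : x ∉ line i0 m (k + 1) := by
      intro h
      obtain ⟨j, hj, h⟩ := mem_line.1 h
      have h2 := congrFun h i0
      simp at h2
      have := hle x hxA
      have hj0 : j = 0 := by omega
      subst hj0
      simp at h
      exact hm (h ▸ hxA)
    have e1 : A ∪ line i0 m (k + 1) = insert x (A.erase x ∪ line i0 m (k + 1)) := by
      rw [← Finset.insert_union, Finset.insert_erase hxA]
    have e2 : A.erase x ∪ line i0 m (k + 1 + 1) =
        insert (m + Pi.single i0 ((k + 1 : ℕ) : ℤ)) (A.erase x ∪ line i0 m (k + 1)) := by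
      rw [line_succ m (k + 1), Finset.union_insert]
    have hlow : ∀ w ∈ A.erase x ∪ line i0 m (k + 1), x i0 ≤ w i0 := by
      intro w hw
      rcases Finset.mem_union.1 hw with hw | hw
      · exact hx w (Finset.mem_of_mem_erase hw)
      · exact (hle x hxA).trans (line_level hw).1
    have habove : ∀ w ∈ A.erase x ∪ line i0 m (k + 1),
        w i0 < (m + Pi.single i0 ((k + 1 : ℕ) : ℤ) : Pt d) i0 := by
      intro w hw
      simp only [Pi.add_apply, Pi.single_eq_same]
      rcases Finset.mem_union.1 hw with hw | hw
      · have := hle w (Finset.mem_of_mem_erase hw)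
        omega
      · have := (line_level hw).2
        omega
    have step : HR i0 (A ∪ line i0 m (k + 1)) (A.erase x ∪ line i0 m (k + 1 + 1)) := by
      rw [e1, e2]
      refine hr_move ?_ ?_ ?_ ⟨_, .refl, habove⟩ ⟨m + Pi.single i0 (k : ℤ), ?_, ?_⟩
      · simp [hxl]
      · exact fun h => lt_irrefl _ (habove _ h)
      · refine Ext.ray h01 (dir_single' i0) fun j hj h => ?_
        have := hlow _ h
        simp at this
        omega
      · rw [Finset.mem_union, mem_line]
        exact Or.inr ⟨k, by omega, rfl⟩
      · rw [add_sub_add_left_eq_sub, ← Pi.single_sub]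
        push_cast
        rw [sub_add_cancel_left]
        exact dir_single' i0
    have := ih (A.erase x) m (k + 1) (by rw [Finset.card_erase_of_mem hxA]; omega)
      (fun a ha => hle a (Finset.mem_of_mem_erase ha)) (fun h => hm (Finset.mem_of_mem_erase h))
    rw [show k + 1 + (j + 1) = k + 1 + 1 + j by ring]
    exact step.trans this

lemma line_shift (h01 : i0 ≠ i1) (m : Pt d) (n : ℕ) :
    HR i0 (line i0 m (n + 2)) (line i0 (m + Pi.single i0 1) (n + 2)) := by
  rw [line_succ' m (n + 1), line_succ (m + Pi.single i0 1) (n + 1)]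
  have habove : ∀ w ∈ line i0 (m + Pi.single i0 1) (n + 1),
      w i0 < (m + Pi.single i0 1 + Pi.single i0 ((n + 1 : ℕ) : ℤ) : Pt d) i0 := by
    intro w hw
    have := (line_level hw).2
    simp at this ⊢
    omega
  have hlow : ∀ w ∈ line i0 (m + Pi.single i0 1) (n + 1), m i0 < w i0 := by
    intro w hw
    have := (line_level hw).1
    simp at this ⊢
    omega
  refine hr_move (fun h => lt_irrefl _ (hlow _ h)) (fun h => lt_irrefl _ (habove _ h)) ?_
    ⟨_, .refl, habove⟩ ⟨m + Pi.single i0 1 + Pi.single i0 (n : ℤ), ?_, ?_⟩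
  · refine Ext.ray h01 (dir_single' i0) fun j hj h => ?_
    have := hlow _ h
    simp at this
    omega
  · rw [mem_line]
    exact ⟨n, by omega, rfl⟩
  · rw [add_sub_add_left_eq_sub, ← Pi.single_sub]
    push_cast
    rw [sub_add_cancel_left]
    exact dir_single' i0

lemma forward (h01 : i0 ≠ i1) (n : ℕ) (U : Finset (Pt d)) (hU : U.card = n + 2) (r : ℤ) :
    ∃ M : Pt d, r ≤ M i0 ∧ HR i0 U (line i0 M (n + 2)) := by
  obtain ⟨m, hmU, hm⟩ := U.exists_max_image (fun a => a i0) (Finset.card_pos.1 (by omega))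
  have h1 := forward_aux h01 (n + 1) (U.erase m) m 0
    (by rw [Finset.card_erase_of_mem hmU]; omega)
    (fun a ha => hm a (Finset.mem_of_mem_erase ha)) (by simp)
  have e : U.erase m ∪ line i0 m (0 + 1) = U := by
    have : line i0 m (0 + 1) = {m} := by simp [line]
    rw [this, Finset.union_comm, ← Finset.insert_eq, Finset.insert_erase hmU]
  rw [e, show 0 + 1 + (n + 1) = n + 2 by ring] at h1
  have h2 : ∀ k : ℕ, HR i0 U (line i0 (m + Pi.single i0 (k : ℤ)) (n + 2)) := by
    intro k
    induction k with
    | zero => simpa using h1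
    | succ k ih =>
      have := ih.trans (line_shift h01 _ n)
      rw [add_assoc, ← Pi.single_add] at this
      exact_mod_cast this
  refine ⟨_, ?_, h2 (r - m i0).toNat⟩
  simp
  omega

/-- Every completion of `S` by an exterior boundary point is reachable from `Lf`. -/
def Good (i0 : Fin d) (Lf S : Finset (Pt d)) : Prop :=
  ∀ y, y ∉ S → Ext i0 S y → (∃ w ∈ S, w - y ∈ Dir d) → HR i0 Lf (insert y S)

lemma good_move {Lf T : Finset (Pt d)} {z z' : Pt d} (hz : z ∉ T) (hz' : z' ∉ T)
    (hd : z' - z ∈ Dir d) (hne : z ≠ z') (h1 : Ext i0 (insert z T) z')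
    (h2 : Ext i0 (insert z' T) z) (hg : Good i0 Lf (insert z' T)) : Good i0 Lf (insert z T) := by
  intro y hy ey hw
  have a := hg z (by simp [hz, hne]) h2 ⟨z', by simp, hd⟩
  rw [Finset.insert_comm] at a
  exact a.trans (hr_move (by simp [hz', hne.symm]) hy h1 ey hw)

lemma dir_ne {a b : Pt d} (h : b - a ∈ Dir d) : a ≠ b := by
  rintro rfl
  obtain ⟨i, h | h⟩ := h
  · have := congrFun h i
    simp at this
  · have := congrFun h i
    simp at this

lemma good_move_level (h01 : i0 ≠ i1) (h02 : i0 ≠ i2) (h12 : i1 ≠ i2)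
    {Lf T : Finset (Pt d)} {z z' : Pt d} (hd : z' - z ∈ Dir d)
    (hz : ∀ t ∈ T, t i0 ≠ z i0) (hz' : ∀ t ∈ T, t i0 ≠ z' i0)
    (hg : Good i0 Lf (insert z' T)) : Good i0 Lf (insert z T) := by
  have hf : ∃ i : Fin d, i0 ≠ i ∧ z' i = z i := by
    obtain ⟨i, hi⟩ := hd
    have : ∀ j, j ≠ i → z' j = z j := by
      intro j hj
      have : (z' - z) j = 0 := by rcases hi with hi | hi <;> rw [hi] <;> simp [hj]
      simpa [sub_eq_zero] using this
    by_cases hi1 : i1 = i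
    · exact ⟨i2, h02, this _ (fun h => h12 (hi1.trans h.symm))⟩
    · exact ⟨i1, h01, this _ hi1⟩
  obtain ⟨i, hi0, hi⟩ := hf
  refine good_move (fun h => hz _ h rfl) (fun h => hz' _ h rfl) hd (dir_ne hd) ?_ ?_ hg
  · refine Ext.ray h01 (dir_single i) fun j hj h => ?_
    rcases Finset.mem_insert.1 h with h | h
    · have := congrFun h i
      simp at this
      omega
    · apply hz' _ h
      simp [hi0]
  · refine Ext.ray h01 (dir_single i) fun j hj h => ?_
    rcases Finset.mem_insert.1 h with h | h
    · have := congrFun h i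
      simp at this
      omega
    · apply hz _ h
      simp [hi0]

lemma exists_top (h01 : i0 ≠ i1) (A : Finset (Pt d)) (hA : A.Nonempty) :
    ∃ z ∈ A, (∀ a ∈ A, a i0 ≤ z i0) ∧ z + Pi.single i1 1 ∉ A := by
  obtain ⟨m, hmA, hm⟩ := A.exists_max_image (fun a => a i0) hA
  obtain ⟨z, hz, hz'⟩ := (A.filter fun a => a i0 = m i0).exists_max_image (fun a => a i1)
    ⟨m, by simp [hmA]⟩
  rw [Finset.mem_filter] at hz
  refine ⟨z, hz.1, fun a ha => (hm a ha).trans hz.2.ge, fun h => ?_⟩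
  have := hz' (z + Pi.single i1 1) (by simp [h, h01, hz.2])
  simp at this

/-- Backward: every completion is reachable from a line placed above. -/
lemma backward_aux (h01 : i0 ≠ i1) (h02 : i0 ≠ i2) (h12 : i1 ≠ i2) (M : Pt d) (n : ℕ) :
    ∀ (j : ℕ) (A : Finset (Pt d)), A.card = j → j ≤ n → (∀ a ∈ A, a i0 < M i0) →
    Good i0 (line i0 M (n + 1)) (A ∪ line i0 (M + Pi.single i0 (j : ℤ)) (n - j)) := by
  intro j
  induction j with
  | zero =>
    intro A hA _ _
    rw [Finset.card_eq_zero.1 hA]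
    simp only [Nat.cast_zero, Pi.single_zero, add_zero, Finset.empty_union, Nat.sub_zero]
    intro y hy ey hw
    rw [line_succ]
    have habove : ∀ w ∈ line i0 M n, w i0 < (M + Pi.single i0 (n : ℤ) : Pt d) i0 := by
      intro w hw
      have := (line_level hw).2
      simpa using this
    exact hr_move (fun h => lt_irrefl _ (habove _ h)) hy ⟨_, .refl, habove⟩ ey hw
  | succ j ih =>
    intro A hA hj hlt
    obtain ⟨z, hzA, hz, hz1⟩ := exists_top h01 A (Finset.card_pos.1 (by omega))
    obtain ⟨k, rfl⟩ : ∃ k, n = j + 1 + k := ⟨n - (j + 1), by omega⟩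
    set T := A.erase z ∪ line i0 (M + Pi.single i0 ((j + 1 : ℕ) : ℤ)) k with hT
    have hTl : ∀ t ∈ T, t i0 ≤ z i0 ∨ M i0 + j < t i0 := by
      intro t ht
      rcases Finset.mem_union.1 ht with ht | ht
      · exact Or.inl (hz t (Finset.mem_of_mem_erase ht))
      · have := (line_level ht).1
        simp at this
        right; omega
    have hzM := hlt z hzA
    have g0 := ih (A.erase z) (by rw [Finset.card_erase_of_mem hzA]; omega) (by omega)
      (fun a ha => hlt a (Finset.mem_of_mem_erase ha))
    have e0 : A.erase z ∪ line i0 (M + Pi.single i0 (j : ℤ)) (j + 1 + k - j) =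
        insert (M + Pi.single i0 (j : ℤ)) T := by
      rw [show j + 1 + k - j = k + 1 by omega, line_succ', Finset.union_insert, add_assoc,
        ← Pi.single_add, hT]
      push_cast
      rfl
    have e1 : A ∪ line i0 (M + Pi.single i0 ((j + 1 : ℕ) : ℤ)) (j + 1 + k - (j + 1)) =
        insert z T := by
      rw [hT, ← Finset.insert_union, Finset.insert_erase hzA, Nat.add_sub_cancel_left]
    rw [e0] at g0
    rw [e1]
    have hzT : z ∉ T := by
      intro h
      rcases Finset.mem_union.1 h with h | h
      · simp at h
      · have := (line_level h).1
        simp at this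
        omega
    have hz1T : z + Pi.single i1 1 ∉ T := by
      intro h
      rcases Finset.mem_union.1 h with h | h
      · exact hz1 (Finset.mem_of_mem_erase h)
      · have := (line_level h).1
        simp [h01] at this
        omega
    -- walk through the free slab
    have slab := slab_conn i0 (z i0 + 1) (M i0 + j) (M + Pi.single i0 (j : ℤ))
      ⟨by simp; omega, by simp⟩ _ (z + Pi.single i0 1) rfl (by simp) (by simp; omega)
    have g1 : Good i0 (line i0 M (j + 1 + k + 1)) (insert (z + Pi.single i0 1) T) := by
      clear_value T
      generalize z + Pi.single i0 1 = v at slab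
      induction slab using Relation.ReflTransGen.head_induction_on with
      | refl => exact g0
      | head hs _ ih2 =>
        refine good_move_level h01 h02 h12 hs.1 ?_ ?_ ih2
        · intro t ht
          have := hTl t ht
          omega
        · intro t ht
          have := hTl t ht
          omega
    have hd : z + Pi.single i0 1 - z ∈ Dir d := by
      rw [add_sub_cancel_left]; exact dir_single i0
    refine good_move hzT ?_ hd (dir_ne hd) ?_ ?_ g1
    · intro h
      have := hTl _ h
      simp at this
      omega
    · refine Ext.ray h01 (dir_single i1) fun l hl h => ?_
      rcases Finset.mem_insert.1 h with h | h
      · have := congrFun h i0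
        simp [h01] at this
      · have := hTl _ h
        simp [h01] at this
        omega
    · have s1 : stp (insert (z + Pi.single i0 1) T) z (z + Pi.single i1 1) := by
        refine ⟨?_, by rw [add_sub_cancel_left]; exact dir_single i1⟩
        rw [Finset.mem_insert, not_or]
        refine ⟨fun h => ?_, hz1T⟩
        have := congrFun h i0
        simp [h01] at this
      have s2 : stp (insert (z + Pi.single i0 1) T) (z + Pi.single i1 1)
          (z + Pi.single i1 1 + Pi.single i0 1) := by
        refine ⟨?_, by rw [add_sub_cancel_left]; exact dir_single i0⟩
        rw [Finset.mem_insert, not_or]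
        refine ⟨fun h => ?_, fun h => ?_⟩
        · have := congrFun h i1
          simp [h01.symm] at this
        · have := hTl _ h
          simp [h01] at this
          omega
      refine Ext.of_conn ((Relation.ReflTransGen.single s1).tail s2) ?_
      refine Ext.ray h01 (dir_single i1) fun l hl h => ?_
      rcases Finset.mem_insert.1 h with h | h
      · have := congrFun h i1
        simp [h01.symm] at this
        omega
      · have := hTl _ h
        simp [h01] at this
        omega

/-- The combinatorial irreducibility statement. -/
lemma comb_main (h01 : i0 ≠ i1) (h02 : i0 ≠ i2) (h12 : i1 ≠ i2) (n : ℕ)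
    (U S : Finset (Pt d)) (y : Pt d) (hU : U.card = n + 2) (hS : S.card = n + 1)
    (hy : y ∉ S) (ey : Ext i0 S y) (hw : ∃ w ∈ S, w - y ∈ Dir d) : HR i0 U (insert y S) := by
  obtain ⟨N, -, hN⟩ := exists_box S
  obtain ⟨M, hM, h1⟩ := forward h01 n U hU N
  have h2 := backward_aux h01 h02 h12 M (n + 1) (n + 1) S hS le_rfl (fun a ha => by
    have := hN a ha i0
    rw [abs_lt] at this
    omega)
  have e : S ∪ line i0 (M + Pi.single i0 ((n + 1 : ℕ) : ℤ)) (n + 1 - (n + 1)) = S := by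
    simp [line]
  rw [e] at h2
  exact h1.trans (h2 y hy ey hw)

end Comb

/-! ### Analytic part -/

section Anal

variable {d : ℕ}

/-- Enumeration of the unit steps. -/
def dvec (k : Fin d × Bool) : Pt d := Pi.single k.1 (if k.2 then 1 else -1)

lemma dvec_mem (k : Fin d × Bool) : dvec k ∈ Dir d := by
  obtain ⟨i, b⟩ := k
  cases b
  · exact ⟨i, Or.inr (by simp [dvec])⟩
  · exact ⟨i, Or.inl (by simp [dvec])⟩

lemma dvec_bij : Function.Bijective (fun k : Fin d × Bool => (⟨dvec k, dvec_mem k⟩ : Dir d)) := by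
  constructor
  · rintro ⟨i, b⟩ ⟨j, c⟩ h
    have h' : dvec (i, b) = dvec (j, c) := congrArg Subtype.val h
    simp only [dvec] at h'
    have hij : i = j := by
      by_contra hne
      have := congrFun h' i
      simp [hne] at this
      cases b <;> simp at this
    subst hij
    have := congrFun h' i
    simp at this
    cases b <;> cases c <;> simp at this ⊢
  · rintro ⟨e, i, h | h⟩
    · exact ⟨(i, true), Subtype.ext (by simp [dvec, h])⟩
    · exact ⟨(i, false), Subtype.ext (by simp [dvec, h])⟩

lemma exists_dvec {e : Pt d} (h : e ∈ Dir d) : ∃ k, dvec k = e := by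
  obtain ⟨k, hk⟩ := dvec_bij.2 ⟨e, h⟩
  exact ⟨k, congrArg Subtype.val hk⟩

instance : Finite (Dir d) := Finite.of_surjective _ dvec_bij.2

instance (T : ℕ) (P : (Fin T → Pt d) → Prop) :
    Finite {s : Fin T → Pt d // (∀ i, s i ∈ Dir d) ∧ P s} := by
  refine Finite.of_injective (β := Fin T → Dir d) (fun s i => ⟨s.1 i, s.2.1 i⟩) ?_
  intro s t h
  ext i : 2
  exact congrArg Subtype.val (congrFun h i)

lemma prob_nonneg (T : ℕ) (P : (Fin T → Pt d) → Prop) : 0 ≤ prob d T P := by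
  unfold prob; positivity

lemma prob_mono {T : ℕ} {P Q : (Fin T → Pt d) → Prop} (h : ∀ s, P s → Q s) :
    prob d T P ≤ prob d T Q := by
  unfold prob
  gcongr
  exact_mod_cast Nat.card_le_card_of_injective
    (fun s : {s : Fin T → Pt d // (∀ i, s i ∈ Dir d) ∧ P s} =>
      (⟨s.1, s.2.1, h _ s.2.2⟩ : {s : Fin T → Pt d // (∀ i, s i ∈ Dir d) ∧ Q s}))
    (fun a b hab => Subtype.ext (congrArg (fun z => z.1) hab))

lemma prob_false (T : ℕ) : prob d T (fun _ => False) = 0 := by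
  simp [prob]

lemma prob_congr {T : ℕ} {P Q : (Fin T → Pt d) → Prop} (h : ∀ s, P s ↔ Q s) :
    prob d T P = prob d T Q := by
  have : P = Q := funext fun s => propext (h s)
  rw [this]

lemma prob_zero {P : (Fin 0 → Pt d) → Prop} (h : ∀ s, P s) : prob d 0 P = 1 := by
  have : Nat.card {s : Fin 0 → Pt d // (∀ i, s i ∈ Dir d) ∧ P s} = 1 := by
    rw [Nat.card_eq_one_iff_unique]
    exact ⟨⟨fun a b => Subtype.ext (Subsingleton.elim _ _)⟩, ⟨⟨Fin.elim0, fun i => i.elim0, h _⟩⟩⟩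
  rw [prob, this]
  simp

lemma prob_pos (hd : 0 < d) {T : ℕ} {P : (Fin T → Pt d) → Prop} (s : Fin T → Pt d)
    (hs : ∀ i, s i ∈ Dir d) (h : P s) : 0 < prob d T P := by
  unfold prob
  have : 0 < Nat.card {s : Fin T → Pt d // (∀ i, s i ∈ Dir d) ∧ P s} :=
    Nat.card_pos_iff.2 ⟨⟨⟨s, hs, h⟩⟩, inferInstance⟩
  positivity

/-- First-step decomposition. -/
lemma prob_succ (T : ℕ) (P : (Fin (T + 1) → Pt d) → Prop) :
    prob d (T + 1) P =
      (∑ k : Fin d × Bool, prob d T (fun s => P (Fin.cons (dvec k) s))) / ((2 * d : ℕ) : ℝ) := by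
  have e : (Σ k : Fin d × Bool, {s : Fin T → Pt d // (∀ i, s i ∈ Dir d) ∧
      P (Fin.cons (dvec k) s)}) ≃
      {s : Fin (T + 1) → Pt d // (∀ i, s i ∈ Dir d) ∧ P s} := by
    refine Equiv.ofBijective (fun x => ⟨Fin.cons (dvec x.1) x.2.1, ?_, x.2.2.2⟩) ⟨?_, ?_⟩
    · intro i
      refine Fin.cases ?_ (fun i => ?_) i
      · simpa using dvec_mem x.1
      · simpa using x.2.2.1 i
    · rintro ⟨k, s, hs⟩ ⟨k', s', hs'⟩ h
      have h' := congrArg Subtype.val h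
      simp only at h'
      obtain ⟨h1, h2⟩ := Fin.cons_inj.1 h'
      have hk : k = k' := dvec_bij.1 (Subtype.ext h1)
      subst hk
      subst h2
      rfl
    · rintro ⟨s, hs, hP⟩
      obtain ⟨k, hk⟩ := exists_dvec (hs 0)
      refine ⟨⟨k, Fin.tail s, fun i => hs i.succ, ?_⟩, Subtype.ext ?_⟩
      · rw [hk, Fin.cons_self_tail]; exact hP
      · simp only
        rw [hk, Fin.cons_self_tail]
  unfold prob
  rw [← Nat.card_congr e, Nat.card_sigma]
  push_cast
  rw [← Finset.sum_div, pow_succ, div_div]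

lemma wpos_zero (x : Pt d) {T : ℕ} (s : Fin T → Pt d) : wpos d x s 0 = x := by
  simp [wpos]

lemma wpos_cons (x e : Pt d) {T : ℕ} (s : Fin T → Pt d) (t : ℕ) :
    wpos d x (Fin.cons e s : Fin (T + 1) → Pt d) (t + 1) = wpos d (x + e) s t := by
  unfold wpos
  rw [Finset.sum_filter, Fin.sum_univ_succ, Finset.sum_filter]
  simp [add_assoc]

/-- Probability of avoiding `A` during times `1..T`. -/
noncomputable def av (A : Set (Pt d)) (T : ℕ) (x : Pt d) : ℝ :=
  prob d T (fun s => ∀ t, 1 ≤ t → t ≤ T → wpos d x s t ∉ A)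

lemma av_zero (A : Set (Pt d)) (x : Pt d) : av A 0 x = 1 :=
  prob_zero (fun s t h1 h2 => by omega)

lemma av_nonneg (A : Set (Pt d)) (T : ℕ) (x : Pt d) : 0 ≤ av A T x := prob_nonneg _ _

open Classical in
lemma av_succ (A : Set (Pt d)) (T : ℕ) (x : Pt d) :
    av A (T + 1) x = (∑ k : Fin d × Bool, if x + dvec k ∈ A then 0 else av A T (x + dvec k)) /
      ((2 * d : ℕ) : ℝ) := by
  unfold av
  rw [prob_succ]
  congr 1
  refine Finset.sum_congr rfl fun k _ => ?_
  split_ifs with h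
  · rw [← prob_false (d := d) T]
    refine prob_congr fun s => ⟨fun hs => ?_, False.elim⟩
    refine hs 1 le_rfl (by omega) ?_
    have := wpos_cons x (dvec k) s 0
    rw [wpos_zero] at this
    rw [← this] at h
    exact h
  · refine prob_congr fun s => ⟨fun hs t h1 h2 => ?_, fun hs t h1 h2 => ?_⟩
    · rw [← wpos_cons]
      exact hs (t + 1) (by omega) (by omega)
    · obtain ⟨t, rfl⟩ : ∃ u, t = u + 1 := ⟨t - 1, by omega⟩
      rw [wpos_cons]
      rcases Nat.eq_zero_or_pos t with rfl | ht
      · rwa [wpos_zero]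
      · exact hs t ht (by omega)

lemma sum_dvec (f : Pt d → ℝ) :
    ∑ k : Fin d × Bool, f (dvec k) = ∑ i, (f (Pi.single i 1) + f (Pi.single i (-1))) := by
  rw [Fintype.sum_prod_type]
  simp [dvec]

/-- Squared Euclidean norm. -/
noncomputable def nsq (x : Pt d) : ℝ := ∑ i, (x i : ℝ) ^ 2

lemma nsq_nonneg (x : Pt d) : 0 ≤ nsq x := Finset.sum_nonneg fun _ _ => sq_nonneg _

lemma sq_le_nsq (x : Pt d) (i : Fin d) : (x i : ℝ) ^ 2 ≤ nsq x :=
  Finset.single_le_sum (f := fun i => (x i : ℝ) ^ 2) (fun _ _ => sq_nonneg _) (Finset.mem_univ i)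

lemma nsq_add_single (x : Pt d) (i : Fin d) (c : ℤ) :
    nsq (x + Pi.single i c) = nsq x + 2 * c * x i + c ^ 2 := by
  unfold nsq
  rw [← Finset.add_sum_erase _ _ (Finset.mem_univ i),
    ← Finset.add_sum_erase _ (fun i => (x i : ℝ) ^ 2) (Finset.mem_univ i)]
  have h3 : ∑ j ∈ Finset.univ.erase i, (((x + (Pi.single i c : Pt d)) j : ℤ) : ℝ) ^ 2
      = ∑ j ∈ Finset.univ.erase i, (x j : ℝ) ^ 2 := by
    refine Finset.sum_congr rfl fun j hj => ?_
    simp [(Finset.mem_erase.1 hj).1]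
  rw [h3]
  simp
  ring

/-- A positive superharmonic function vanishing at infinity. -/
noncomputable def sup (x : Pt d) : ℝ := 1 / (nsq x + 4)

lemma sup_pos (x : Pt d) : 0 < sup x := by
  have := nsq_nonneg x
  unfold sup; positivity

lemma pair_bound (y M : ℝ) (h : y ^ 2 + 5 ≤ M) :
    1 / (M + 2 * y) + 1 / (M - 2 * y) ≤ 2 / M + 10 * y ^ 2 / M ^ 3 := by
  have hM : 0 < M := by nlinarith [sq_nonneg y]
  have h1 : 0 < M + 2 * y := by nlinarith [sq_nonneg (y + 1)]
  have h2 : 0 < M - 2 * y := by nlinarith [sq_nonneg (y - 1)]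
  have h20 : 20 * y ^ 2 ≤ M ^ 2 := by nlinarith [sq_nonneg (y ^ 2 - 5), sq_nonneg y]
  rw [div_add_div _ _ h1.ne' h2.ne', div_add_div _ _ hM.ne' (by positivity),
    div_le_div_iff₀ (by positivity) (by positivity)]
  have : 0 ≤ M * (2 * M * y ^ 2 * (M ^ 2 - 20 * y ^ 2)) := by
    have : 0 ≤ M ^ 2 - 20 * y ^ 2 := by linarith
    positivity
  nlinarith

lemma sup_superharmonic (hd : 5 ≤ d) (x : Pt d) :
    ∑ k : Fin d × Bool, sup (x + dvec k) ≤ ((2 * d : ℕ) : ℝ) * sup x := by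
  rw [sum_dvec (fun e => sup (x + e))]
  set M := nsq x + 5 with hM
  have hn := nsq_nonneg x
  have hMp : 0 < M := by linarith
  have hM1 : 0 < M - 1 := by linarith
  have h1 : ∀ i, sup (x + Pi.single i 1) + sup (x + Pi.single i (-1)) ≤
      2 / M + 10 * (x i : ℝ) ^ 2 / M ^ 3 := by
    intro i
    have := pair_bound (x i : ℝ) M (by have := sq_le_nsq x i; linarith)
    refine le_trans (le_of_eq ?_) this
    unfold sup
    rw [nsq_add_single, nsq_add_single]
    push_cast
    congr 2 <;> rw [hM] <;> ring
  refine (Finset.sum_le_sum fun i _ => h1 i).trans ?_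
  have h2 : ∑ i, (2 / M + 10 * (x i : ℝ) ^ 2 / M ^ 3) = d * (2 / M) + 10 * nsq x / M ^ 3 := by
    rw [Finset.sum_add_distrib, ← Finset.sum_div Finset.univ (fun i => 10 * (x i : ℝ) ^ 2),
      ← Finset.mul_sum]
    simp [nsq]
  rw [h2]
  have h3 : nsq x = M - 5 := by rw [hM]; ring
  have h4 : sup x = 1 / (M - 1) := by unfold sup; rw [hM]; congr 1; ring
  rw [h4, h3]
  push_cast
  have hd' : (5 : ℝ) ≤ d := by exact_mod_cast hd
  have h5 : 10 * (M - 5) / M ^ 3 ≤ 10 / (M * (M - 1)) := by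
    rw [div_le_div_iff₀ (by positivity) (by positivity)]
    nlinarith [mul_pos hMp hMp, mul_pos hMp hM1]
  have h6 : (d : ℝ) * (2 / M) + 2 * d / (M * (M - 1)) = 2 * d * (1 / (M - 1)) := by
    field_simp
    ring
  have h7 : 10 / (M * (M - 1)) ≤ 2 * d / (M * (M - 1)) := by
    gcongr
    linarith
  linarith

/-- Uniformly positive avoidance probability. -/
def Pos (A : Set (Pt d)) (x : Pt d) : Prop := ∃ c : ℝ, 0 < c ∧ c ≤ 1 ∧ ∀ T, c ≤ av A T x

lemma one_sub_av_le (hd : 5 ≤ d) (A : Set (Pt d)) (m : ℝ) (hm : 0 < m) (hA : ∀ a ∈ A, m ≤ sup a)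
    (T : ℕ) : ∀ x, 1 - av A T x ≤ sup x / m := by
  classical
  have hd0 : (0 : ℝ) < ((2 * d : ℕ) : ℝ) := by exact_mod_cast (by omega : 0 < 2 * d)
  induction T with
  | zero =>
    intro x
    rw [av_zero]
    have := sup_pos x
    simp only [sub_self]
    positivity
  | succ T ih =>
    intro x
    rw [av_succ, one_sub_div hd0.ne', div_le_iff₀ hd0]
    have h1 : ∀ k : Fin d × Bool,
        1 - (if x + dvec k ∈ A then 0 else av A T (x + dvec k)) ≤ sup (x + dvec k) / m := by
      intro k
      split_ifs with h
      · rw [sub_zero, le_div_iff₀ hm, one_mul]; exact hA _ h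
      · exact ih _
    have h2 := Finset.sum_le_sum (s := Finset.univ) fun k _ => h1 k
    rw [Finset.sum_sub_distrib, ← Finset.sum_div] at h2
    have h3 : ∑ _k : Fin d × Bool, (1 : ℝ) = ((2 * d : ℕ) : ℝ) := by
      simp [mul_comm]
    rw [h3] at h2
    refine h2.trans ?_
    rw [div_mul_eq_mul_div]
    gcongr
    rw [mul_comm]
    exact sup_superharmonic hd x

lemma exists_sup_bound (A : Finset (Pt d)) : ∃ m : ℝ, 0 < m ∧ ∀ a ∈ A, m ≤ sup a := by
  induction A using Finset.induction_on with
  | empty => exact ⟨1, by simp⟩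
  | insert a s _ ih =>
    obtain ⟨m, h0, h⟩ := ih
    refine ⟨min m (sup a), lt_min h0 (sup_pos a), fun b hb => ?_⟩
    rcases Finset.mem_insert.1 hb with rfl | hb
    · exact min_le_right _ _
    · exact (min_le_left _ _).trans (h b hb)

lemma pos_far (hd : 5 ≤ d) (A : Finset (Pt d)) (i0 : Fin d) :
    ∃ r : ℤ, ∀ z : Pt d, r ≤ z i0 → Pos (↑A) z := by
  obtain ⟨m, hm, hA⟩ := exists_sup_bound A
  obtain ⟨r, hr⟩ := exists_nat_gt (2 / m)
  refine ⟨r + 1, fun z hz => ⟨1 / 2, by norm_num, by norm_num, fun T => ?_⟩⟩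
  have h1 := one_sub_av_le hd (↑A) m hm (by simpa using hA) T z
  have h2 : sup z / m ≤ 1 / 2 := by
    have hz' : (r : ℝ) + 1 ≤ z i0 := by exact_mod_cast hz
    have hr0 : (0 : ℝ) ≤ r := by positivity
    have h3 : (r : ℝ) ≤ nsq z + 4 := by
      have := sq_le_nsq z i0
      nlinarith
    have hp : 0 < nsq z + 4 := by have := nsq_nonneg z; linarith
    rw [div_lt_iff₀ hm] at hr
    unfold sup
    rw [div_div, div_le_div_iff₀ (by positivity) (by norm_num)]
    nlinarith
  linarith

lemma pos_step (hd : 0 < d) {A : Set (Pt d)} {p q : Pt d} (h : q - p ∈ Dir d) (hq : q ∉ A)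
    (hp : Pos A q) : Pos A p := by
  classical
  obtain ⟨c, h0, h1, hc⟩ := hp
  obtain ⟨k, hk⟩ := exists_dvec h
  have hd0 : (1 : ℝ) ≤ ((2 * d : ℕ) : ℝ) := by exact_mod_cast (by omega : 1 ≤ 2 * d)
  refine ⟨c / ((2 * d : ℕ) : ℝ), by positivity, (div_le_self h0.le hd0).trans h1, fun T => ?_⟩
  cases T with
  | zero => rw [av_zero]; exact (div_le_self h0.le hd0).trans h1
  | succ T =>
    rw [av_succ]
    gcongr
    have e : p + dvec k = q := by rw [hk]; abel
    have := Finset.single_le_sum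
      (f := fun k : Fin d × Bool => if p + dvec k ∈ A then 0 else av A T (p + dvec k))
      (fun k _ => by split_ifs; exacts [le_rfl, av_nonneg _ _ _]) (Finset.mem_univ k)
    simp only [e, hq, if_false] at this
    exact (hc T).trans this

lemma ext_pos (hd : 5 ≤ d) {i0 : Fin d} {W : Finset (Pt d)} {x : Pt d} (h : Ext i0 W x) :
    Pos (↑(insert x W) : Set (Pt d)) x := by
  obtain ⟨r, hr⟩ := pos_far hd (insert x W) i0
  obtain ⟨z, hz, hzr⟩ := h.high r
  have hp := hr z hzr
  have key : ∀ p, Conn W p z → Pos (↑(insert x W) : Set (Pt d)) p ∨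
      Pos (↑(insert x W) : Set (Pt d)) x := by
    intro p hpz
    induction hpz using Relation.ReflTransGen.head_induction_on with
    | refl => exact Or.inl hp
    | head hs _ ih =>
      rename_i a c _
      rcases ih with ih | ih
      · by_cases hc : c = x
        · right; rwa [hc] at ih
        · left
          refine pos_step (by omega) hs.2 ?_ ih
          simp [hc, hs.1]
      · exact Or.inr ih
  exact (key x hz).elim id id

lemma esc_pos {A : Set (Pt d)} {x : Pt d} (hx : x ∈ A) (h : Pos A x) : 0 < esc d A x := by
  obtain ⟨c, h0, -, hc⟩ := h
  rw [esc, if_pos hx]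
  exact h0.trans_le (le_ciInf hc)

lemma esc_nonneg (A : Set (Pt d)) (x : Pt d) : 0 ≤ esc d A x := by
  unfold esc
  split_ifs
  · exact Real.iInf_nonneg fun T => prob_nonneg _ _
  · exact le_rfl

lemma esc_le {A : Set (Pt d)} {x : Pt d} (hx : x ∈ A) (T : ℕ) : esc d A x ≤ av A T x := by
  rw [esc, if_pos hx]
  exact ciInf_le ⟨0, by rintro _ ⟨T, rfl⟩; exact prob_nonneg _ _⟩ T

lemma sum_nsq (hd : 0 < d) (K : ℝ) (p : Pt d) :
    (∑ k : Fin d × Bool, (K - nsq (p + dvec k))) / ((2 * d : ℕ) : ℝ) = K - nsq p - 1 := by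
  rw [sum_dvec (fun e => K - nsq (p + e))]
  have : ∀ i, (K - nsq (p + Pi.single i 1) + (K - nsq (p + Pi.single i (-1)))) =
      2 * (K - nsq p - 1) := by
    intro i
    rw [nsq_add_single, nsq_add_single]
    push_cast
    ring
  rw [Finset.sum_congr rfl fun i _ => this i]
  have hd0 : (0 : ℝ) < d := by exact_mod_cast hd
  simp
  field_simp

/-- Exposed points lie in the exterior. -/
lemma esc_ext (hd : 0 < d) {i0 i1 : Fin d} (h01 : i0 ≠ i1) {V : Finset (Pt d)} {x : Pt d}
    (hx : x ∈ V) (h : 0 < esc d (↑V) x) : Ext i0 (V.erase x) x := by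
  classical
  by_contra hne
  obtain ⟨N, hN0, hN⟩ := exists_box (V.erase x)
  have hC : ∀ q, Conn (V.erase x) x q → ∀ i, |q i| < N := by
    intro q hq i
    by_contra hc
    exact hne (Ext.of_conn hq (Ext.far h01 hN (not_lt.1 hc)))
  set K : ℝ := d * (N : ℝ) ^ 2 with hK
  have hd0 : (0 : ℝ) < ((2 * d : ℕ) : ℝ) := by exact_mod_cast (by omega : 0 < 2 * d)
  have hnb : ∀ q, Conn (V.erase x) x q → ∀ k : Fin d × Bool, 0 ≤ K - nsq (q + dvec k) := by
    intro q hq k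
    have : nsq (q + dvec k) ≤ ∑ _i : Fin d, (N : ℝ) ^ 2 := by
      refine Finset.sum_le_sum fun i _ => ?_
      have h1 := hC q hq i
      have h2 : |dvec k i| ≤ 1 := by
        unfold dvec
        by_cases hi : i = k.1
        · subst hi
          simp only [Pi.single_eq_same]
          split_ifs <;> simp
        · simp [hi]
      have h3 : |(q + dvec k) i| ≤ N := by
        have := abs_add_le (q i) (dvec k i)
        rw [Pi.add_apply]
        omega
      have h4 : |(((q + dvec k) i : ℤ) : ℝ)| ≤ N := by exact_mod_cast h3
      exact sq_le_sq' (abs_le.1 h4).1 (abs_le.1 h4).2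
    simp at this
    linarith
  have hmain : ∀ T : ℕ, ∀ q, Conn (V.erase x) x q →
      ∑ t ∈ Finset.range T, av (↑V) t q ≤ K - nsq q := by
    intro T
    induction T with
    | zero =>
      intro q hq
      have h1 := sum_nsq hd K q
      have h2 : 0 ≤ (∑ k : Fin d × Bool, (K - nsq (q + dvec k))) / ((2 * d : ℕ) : ℝ) :=
        div_nonneg (Finset.sum_nonneg fun k _ => hnb q hq k) hd0.le
      simp only [Finset.range_zero, Finset.sum_empty]
      linarith
    | succ T ih =>
      intro q hq
      rw [Finset.sum_range_succ', av_zero]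
      have h1 := sum_nsq hd K q
      have h2 : ∑ t ∈ Finset.range T, av (↑V) (t + 1) q ≤
          (∑ k : Fin d × Bool, (K - nsq (q + dvec k))) / ((2 * d : ℕ) : ℝ) := by
        simp only [av_succ]
        rw [← Finset.sum_div, Finset.sum_comm]
        gcongr with k _
        by_cases hk : q + dvec k ∈ (↑V : Set (Pt d))
        · simp only [hk, if_true, Finset.sum_const_zero]
          exact hnb q hq k
        · simp only [hk, if_false]
          refine ih _ (hq.tail ⟨fun hm => hk (Finset.mem_of_mem_erase hm), ?_⟩)
          rw [add_sub_cancel_left]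
          exact dvec_mem k
      linarith
  obtain ⟨T, hT⟩ := exists_nat_gt (K / esc d (↑V) x)
  rw [div_lt_iff₀ h] at hT
  have h1 := hmain T x .refl
  have h2 : ∑ _t ∈ Finset.range T, esc d (↑V) x ≤ ∑ t ∈ Finset.range T, av (↑V) t x :=
    Finset.sum_le_sum fun t _ => esc_le hx t
  have h3 := nsq_nonneg x
  simp at h2
  linarith

end Anal

/-! ### Positivity of HAT transitions -/

section Trans

variable {d : ℕ}

/-- Probability that the first hitting time of `W` is `t`. -/
noncomputable def fh (W : Set (Pt d)) (t : ℕ) (x : Pt d) : ℝ :=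
  prob d t (fun s => 1 ≤ t ∧ wpos d x s t ∈ W ∧ ∀ u, 1 ≤ u → u < t → wpos d x s u ∉ W)

lemma fh_nonneg (W : Set (Pt d)) (t : ℕ) (x : Pt d) : 0 ≤ fh W t x := prob_nonneg _ _

lemma fh_zero (W : Set (Pt d)) (x : Pt d) : fh W 0 x = 0 := by
  unfold fh
  rw [← prob_false (d := d) 0]
  exact prob_congr fun s => ⟨fun h => by omega, False.elim⟩

open Classical in
lemma fh_succ_le (W : Set (Pt d)) (t : ℕ) (x : Pt d) :
    fh W (t + 1) x ≤ (∑ k : Fin d × Bool, if x + dvec k ∈ W then (if t = 0 then 1 else 0)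
      else fh W t (x + dvec k)) / ((2 * d : ℕ) : ℝ) := by
  unfold fh
  rw [prob_succ]
  gcongr with k _
  have h1 : ∀ s : Fin t → Pt d, wpos d x (Fin.cons (dvec k) s : Fin (t + 1) → Pt d) 1 =
      x + dvec k := by
    intro s
    have := wpos_cons x (dvec k) s 0
    rwa [wpos_zero] at this
  split_ifs with h h0
  · subst h0
    rw [← prob_zero (d := d) (P := fun _ => True) (by simp)]
    exact prob_mono (by simp)
  · rw [← prob_false (d := d) t]
    refine prob_mono fun s hs => ?_
    exact hs.2.2 1 le_rfl (by omega) (by rw [h1]; exact h)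
  · refine prob_mono fun s hs => ?_
    have hw := hs.2.1
    rw [wpos_cons] at hw
    refine ⟨?_, hw, fun u hu1 hu2 => ?_⟩
    · by_contra hc
      have h0 : t = 0 := by omega
      subst h0
      rw [wpos_zero] at hw
      exact h hw
    · rw [← wpos_cons]
      exact hs.2.2 (u + 1) (by omega) (by omega)

lemma fh_sum_le (hd : 0 < d) (W : Set (Pt d)) (T : ℕ) :
    ∀ x, ∑ t ∈ Finset.range T, fh W t x ≤ 1 := by
  classical
  have hd0 : (0 : ℝ) < ((2 * d : ℕ) : ℝ) := by exact_mod_cast (by omega : 0 < 2 * d)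
  induction T with
  | zero => simp
  | succ T ih =>
    intro x
    rw [Finset.sum_range_succ', fh_zero, add_zero]
    refine (Finset.sum_le_sum fun t _ => fh_succ_le W t x).trans ?_
    rw [← Finset.sum_div, Finset.sum_comm, div_le_one hd0]
    have h3 : ∑ _k : Fin d × Bool, (1 : ℝ) = ((2 * d : ℕ) : ℝ) := by
      simp [mul_comm]
    rw [← h3]
    refine Finset.sum_le_sum fun k _ => ?_
    by_cases h : x + dvec k ∈ W
    · simp only [h, if_true, Finset.sum_ite_eq']
      split_ifs <;> norm_num
    · simp only [h, if_false]
      exact ih _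

lemma fh_summable (hd : 0 < d) (W : Set (Pt d)) (x : Pt d) : Summable fun t => fh W t x :=
  summable_of_sum_range_le (fun t => fh_nonneg W t x) (fun T => fh_sum_le hd W T x)

lemma exists_path {W : Finset (Pt d)} {x y w : Pt d} (h : Conn W x y) (hw : w ∈ W)
    (hyw : w - y ∈ Dir d) : ∃ (t : ℕ) (s : Fin t → Pt d), (∀ i, s i ∈ Dir d) ∧
      (1 ≤ t ∧ wpos d x s t ∈ (↑W : Set (Pt d)) ∧ wpos d x s (t - 1) = y ∧
        ∀ u, 1 ≤ u → u < t → wpos d x s u ∉ (↑W : Set (Pt d))) := by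
  induction h using Relation.ReflTransGen.head_induction_on with
  | refl =>
    refine ⟨1, Fin.cons (w - y) Fin.elim0, ?_, le_rfl, ?_, ?_, fun u h1 h2 => by omega⟩
    · intro i
      refine Fin.cases ?_ (fun i => i.elim0) i
      simpa using hyw
    · have := wpos_cons y (w - y) (Fin.elim0 : Fin 0 → Pt d) 0
      rw [wpos_zero] at this
      rw [this]
      simpa using hw
    · exact wpos_zero _ _
  | head hs _ ih =>
    rename_i a c _
    obtain ⟨t, s, h1, h2, h3, h4, h5⟩ := ih
    have e : a + (c - a) = c := by abel
    refine ⟨t + 1, Fin.cons (c - a) s, ?_, by omega, ?_, ?_, ?_⟩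
    · intro i
      refine Fin.cases ?_ (fun i => ?_) i
      · simpa using hs.2
      · simpa using h1 i
    · rw [wpos_cons, e]; exact h3
    · obtain ⟨t, rfl⟩ : ∃ u, t = u + 1 := ⟨t - 1, by omega⟩
      rw [Nat.add_sub_cancel, wpos_cons, e]
      exact h4
    · intro u hu1 hu2
      obtain ⟨u, rfl⟩ : ∃ v, u = v + 1 := ⟨u - 1, by omega⟩
      rw [wpos_cons, e]
      rcases Nat.eq_zero_or_pos u with rfl | hu
      · rw [wpos_zero]
        exact hs.1
      · exact h5 u hu (by omega)

lemma hitFrom_pos (hd : 0 < d) {W : Finset (Pt d)} {x y w : Pt d} (h : Conn W x y) (hw : w ∈ W)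
    (hyw : w - y ∈ Dir d) : 0 < hitFrom d (↑W) x y ∧ 0 < retProb d (↑W) x := by
  obtain ⟨t, s, hs, ht⟩ := exists_path h hw hyw
  have hsum := fh_summable hd (↑W : Set (Pt d)) x
  have hle : ∀ t, prob d t (fun s => 1 ≤ t ∧ wpos d x s t ∈ (↑W : Set (Pt d)) ∧
      wpos d x s (t - 1) = y ∧ ∀ u, 1 ≤ u → u < t → wpos d x s u ∉ (↑W : Set (Pt d))) ≤
      fh (↑W : Set (Pt d)) t x := fun t => prob_mono fun s hs => ⟨hs.1, hs.2.1, hs.2.2.2⟩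
  have hsum' := Summable.of_nonneg_of_le (fun t => prob_nonneg _ _) hle hsum
  have hp : 0 < prob d t (fun s => 1 ≤ t ∧ wpos d x s t ∈ (↑W : Set (Pt d)) ∧
      wpos d x s (t - 1) = y ∧ ∀ u, 1 ≤ u → u < t → wpos d x s u ∉ (↑W : Set (Pt d))) :=
    prob_pos hd s hs ht
  exact ⟨hsum'.tsum_pos (fun t => prob_nonneg _ _) t hp,
    hsum.tsum_pos (fun t => fh_nonneg _ _ _) t (hp.trans_le (hle t))⟩

lemma hitFrom_nonneg (W : Set (Pt d)) (x y : Pt d) : 0 ≤ hitFrom d W x y :=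
  tsum_nonneg fun _ => prob_nonneg _ _

lemma retProb_nonneg (W : Set (Pt d)) (x : Pt d) : 0 ≤ retProb d W x :=
  tsum_nonneg fun _ => prob_nonneg _ _

lemma pHAT_nonneg (U : Conf d) (x y : Pt d) : 0 ≤ pHAT d U x y :=
  mul_nonneg (div_nonneg (esc_nonneg _ _) (tsum_nonneg fun _ => esc_nonneg _ _))
    (div_nonneg (hitFrom_nonneg _ _ _) (retProb_nonneg _ _))

lemma pHAT_pos (hd : 5 ≤ d) {i0 : Fin d} {W : Finset (Pt d)} {x y w : Pt d} (hx : x ∉ W)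
    (hy : y ∉ W) (ex : Ext i0 W x) (ey : Ext i0 W y) (hw : w ∈ W) (hyw : w - y ∈ Dir d) :
    0 < pHAT d (insert x W) x y := by
  have he : 0 < esc d (↑(insert x W) : Set (Pt d)) x := esc_pos (by simp) (ext_pos hd ex)
  have hc : 0 < capa d (↑(insert x W) : Set (Pt d)) := by
    unfold capa
    refine Summable.tsum_pos ?_ (fun _ => esc_nonneg _ _) ⟨x, by simp⟩ he
    exact (hasSum_fintype _).summable
  have hset : (↑(insert x W) : Set (Pt d)) \ {x} = ↑W := by
    ext z
    simp only [Finset.coe_insert, Set.mem_sdiff, Set.mem_insert_iff, Set.mem_singleton_iff]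
    constructor
    · rintro ⟨h | h, h'⟩
      · exact absurd h h'
      · exact h
    · intro h
      exact ⟨Or.inr h, fun h' => hx (h' ▸ h)⟩
  obtain ⟨h1, h2⟩ := hitFrom_pos (by omega) (ex.conn hy ey) hw hyw
  unfold pHAT harm transP
  rw [hset]
  positivity

lemma hatProb_pos (hd : 5 ≤ d) {i0 : Fin d} {A B : Conf d} (h : HStep i0 A B) :
    0 < hatProb d A B := by
  classical
  obtain ⟨W, x, y, hx, hy, hxy, ex, ey, ⟨w, hw, hyw⟩, rfl, rfl⟩ := h
  have hp := pHAT_pos hd hx hy ex ey hw hyw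
  have hne : insert y W ≠ insert x W := by
    intro h
    have : y ∈ insert x W := h ▸ Finset.mem_insert_self y W
    rcases Finset.mem_insert.1 this with h | h
    · exact hxy h.symm
    · exact hy h
  rw [hatProb, if_neg hne]
  have hin : ∀ a, Summable fun b => if a ∈ insert x W ∧ a ≠ b ∧
      insert y W = insert b ((insert x W).erase a) then pHAT d (insert x W) a b else 0 := by
    intro a
    refine summable_of_ne_finset_zero (s := insert y W) fun b hb => if_neg ?_
    rintro ⟨-, -, h⟩
    exact hb (h ▸ Finset.mem_insert_self _ _)
  have hnn : ∀ a b, 0 ≤ if a ∈ insert x W ∧ a ≠ b ∧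
      insert y W = insert b ((insert x W).erase a) then pHAT d (insert x W) a b else 0 := by
    intro a b
    split_ifs
    exacts [pHAT_nonneg _ _ _, le_rfl]
  refine Summable.tsum_pos ?_ (fun a => tsum_nonneg (hnn a)) x ?_
  · refine summable_of_ne_finset_zero (s := insert x W) fun a ha => ?_
    simp only [ha, false_and, if_false, tsum_zero]
  · refine (hin x).tsum_pos (hnn x) y ?_
    rw [if_pos]
    · exact hp
    · exact ⟨Finset.mem_insert_self _ _, hxy, by rw [Finset.erase_insert hx]⟩

lemma exists_traj {i0 : Fin d} {U V : Conf d} (h : HR i0 U V) :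
    ∃ (t : ℕ) (u : ℕ → Conf d), u 0 = U ∧ u t = V ∧ ∀ s < t, HStep i0 (u s) (u (s + 1)) := by
  induction h with
  | refl => exact ⟨0, fun _ => U, rfl, rfl, fun s hs => by omega⟩
  | tail _ hs ih =>
    rename_i b c _
    obtain ⟨t, u, h0, ht, h⟩ := ih
    refine ⟨t + 1, fun s => if s ≤ t then u s else c, by simp [h0], by simp, fun s hst => ?_⟩
    rcases Nat.lt_or_ge s t with h' | h'
    · simp only [show s ≤ t by omega, show s + 1 ≤ t by omega, if_true]
      exact h s h'
    · have : s = t := by omega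
      subst this
      simp [ht, hs]

lemma dir_of_latAdj {x y : Pt d} (h : latAdj d x y) : y - x ∈ Dir d := by
  unfold latAdj at h
  have : ∃ i, (x i - y i).natAbs ≠ 0 := by
    by_contra hc
    push Not at hc
    rw [Finset.sum_eq_zero fun i _ => hc i] at h
    omega
  obtain ⟨i, hi⟩ := this
  rw [← Finset.add_sum_erase _ _ (Finset.mem_univ i)] at h
  have h0 : ∑ j ∈ Finset.univ.erase i, (x j - y j).natAbs = 0 := by omega
  have hj : ∀ j, j ≠ i → x j = y j := by
    intro j hj
    have := Finset.sum_eq_zero_iff.1 h0 j (by simp [hj])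
    omega
  have hc : y i - x i = 1 ∨ y i - x i = -1 := by omega
  refine ⟨i, hc.imp (fun hc => ?_) (fun hc => ?_)⟩ <;>
  · funext j
    by_cases hji : j = i
    · subst hji
      simpa using hc
    · simp [hji, hj j hji]

end Trans

/-- **Irreducibility.** HAT is irreducible on the equivalence classes of non-isolated
`n`-element configurations, for every `d ≥ 5` and `n ≥ 4`. -/
theorem hat_irreducible (d n : ℕ) (hd : 5 ≤ d) (hn : 4 ≤ n)
    (U V : Conf d) (hU : U.card = n) (hV : V.card = n)
    (hUni : NonIso d U) (hVni : NonIso d V) :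
    ∃ t : ℕ, ∀ μ : Measure (ℕ → Conf d), IsHATLaw d U μ →
      0 < μ {ω | SymEq d V (ω t)} := by
  have i0h : 0 < d := by omega
  have i1h : 1 < d := by omega
  have i2h : 2 < d := by omega
  have h01 : (⟨0, i0h⟩ : Fin d) ≠ ⟨1, i1h⟩ := by simp
  have h02 : (⟨0, i0h⟩ : Fin d) ≠ ⟨2, i2h⟩ := by simp
  have h12 : (⟨1, i1h⟩ : Fin d) ≠ ⟨2, i2h⟩ := by simp
  obtain ⟨x, hxV, hx, y, hyV, hxy⟩ := hVni
  have hdir := dir_of_latAdj hxy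
  have ex := esc_ext i0h h01 hxV hx
  have hr := comb_main h01 h02 h12 (n - 2) U (V.erase x) x (by omega)
    (by rw [Finset.card_erase_of_mem hxV]; omega) (Finset.notMem_erase x V) ex
    ⟨y, Finset.mem_erase.2 ⟨(dir_ne hdir).symm, hyV⟩, hdir⟩
  rw [Finset.insert_erase hxV] at hr
  obtain ⟨t, u, h0, ht, hu⟩ := exists_traj hr
  refine ⟨t, fun μ hμ => ?_⟩
  have h1 := hμ.2 t u
  have h2 : 0 < μ {ω | ∀ s ≤ t, ω s = u s} := by
    rw [h1, if_pos h0, one_mul, pos_iff_ne_zero, Finset.prod_ne_zero_iff]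
    intro s hs
    rw [← pos_iff_ne_zero, ENNReal.ofReal_pos]
    exact hatProb_pos hd (hu s (Finset.mem_range.1 hs))
  refine h2.trans_le (measure_mono fun ω hω => ?_)
  refine ⟨1, fun _ => 1, 0, fun _ => Or.inl rfl, ?_⟩
  rw [hω t le_rfl, ht]
  have : SymImage d 1 (fun _ => 1) 0 = id := by
    funext p i
    simp [SymImage]
  rw [this, Finset.image_id]

end HATFormal
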